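/- The set of normalized B-almost harmonic vectors is a convex subset of [0,∞)^V whose set of extreme points is exactly {φ^C : C a B-harmonic component of B} ∪ {φ^s : s a B-summable sink}. -/

import Mathlib

open Filter Finset

/-- The spectral radius of a real matrix, `ρ(M) = lim_n ‖Mⁿ‖^{1/n}`
(computed with the entrywise ℓ¹-norm, and as a `limsup` so that it is always defined;
it is `0` for the matrix over the empty index type). -/
noncomputable def specRad {n : Type*} [Fintype n] [DecidableEq n] (M : Matrix n n ℝ) : ℝ :=
  Filter.limsup (fun k : ℕ => (∑ i, ∑ j, |(M ^ k) i j|) ^ ((1 : ℝ) / (k : ℝ))) Filter.atTop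

/-- The spectral radius `ρ(B^S)` of the submatrix of `B` obtained by restricting to `S × S`. -/
noncomputable def specRadOn {V : Type*} [Fintype V] (B : Matrix V V ℝ) (S : Set V) : ℝ :=
  letI : Fintype S := (Set.toFinite S).fintype
  letI : DecidableEq S := Classical.decEq _
  specRad (fun i j : S => B i.1 j.1)

variable {V : Type*} [Fintype V]

/-- A vertex `s` is a sink for `B` when the row of `B` at `s` vanishes. -/
def IsSink (B : Matrix V V ℝ) (s : V) : Prop := ∀ w, B s w = 0

/-- `ψ` is `B`-harmonic: `Σ_w B v w * ψ w = ψ v` for all `v`. -/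
def IsHarmonic (B : Matrix V V ℝ) (ψ : V → ℝ) : Prop :=
  ∀ v, ∑ w, B v w * ψ w = ψ v

/-- `ψ` is almost `B`-harmonic: `Σ_w B v w * ψ w = ψ v` for all `v` that are not sinks. -/
def IsAlmostHarmonic (B : Matrix V V ℝ) (ψ : V → ℝ) : Prop :=
  ∀ v, ¬ IsSink B v → ∑ w, B v w * ψ w = ψ v

/-- A sink `s` is `B`-summable when `Σ_n (Bⁿ)_{v s} < ∞` for all `v`. -/
def IsSummableSink [DecidableEq V] (B : Matrix V V ℝ) (s : V) : Prop :=
  IsSink B s ∧ ∀ v, Summable (fun n : ℕ => (B ^ n) v s)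

/-- The vector `φ^s` associated to a `B`-summable sink `s`. -/
noncomputable def phiSink [DecidableEq V] (B : Matrix V V ℝ) (s : V) : V → ℝ :=
  fun v => (∑' n : ℕ, (B ^ n) v s) / (∑ w, ∑' n : ℕ, (B ^ n) w s)

/-- `v ⤳ w`: `(Bⁿ)_{vw} > 0` for some `n ≥ 0`. -/
def Reaches [DecidableEq V] (B : Matrix V V ℝ) (v w : V) : Prop :=
  ∃ n : ℕ, 0 < (B ^ n) v w

/-- The closure of a set of vertices: all vertices that reach it. -/
def closureSet [DecidableEq V] (B : Matrix V V ℝ) (F : Set V) : Set V :=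
  {v | ∃ w ∈ F, Reaches B v w}

/-- A component: an equivalence class of `∼` on which `B` is nonzero. -/
def IsComponent [DecidableEq V] (B : Matrix V V ℝ) (C : Set V) : Prop :=
  (∃ v, C = {w | Reaches B v w ∧ Reaches B w v}) ∧
  ∃ v ∈ C, ∃ w ∈ C, B v w ≠ 0

/-- A `B`-harmonic component. -/
def IsHarmonicComponent [DecidableEq V] (B : Matrix V V ℝ) (C : Set V) : Prop :=
  IsComponent B C ∧ specRadOn B C = 1 ∧
  ((closureSet B C \ C).Nonempty → specRadOn B (closureSet B C \ C) < 1)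

/-- The property characterizing the vector `φ^C` of a `B`-harmonic component `C`. -/
def IsPhiC [DecidableEq V] (B : Matrix V V ℝ) (C : Set V) (φ : V → ℝ) : Prop :=
  (∀ v, 0 ≤ φ v) ∧ (∑ v, φ v = 1) ∧ IsHarmonic B φ ∧
  (∀ v ∈ C, ∑ w, Set.indicator C (fun w => B v w * φ w) w = φ v) ∧
  (∀ v, φ v ≠ 0 ↔ v ∈ closureSet B C)

open scoped Classical in
/-- The vector `φ^C` of a `B`-harmonic component `C` (defined by choice; for a `B`-harmonic
component it is unique). -/
noncomputable def phiComp [DecidableEq V] (B : Matrix V V ℝ) (C : Set V) : V → ℝ :=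
  if h : ∃ φ : V → ℝ, IsPhiC B C φ then h.choose else 0

/-!
The extreme points are exactly the minimal vectors, those that are proportional to every almost
harmonic vector between `0` and themselves.

If a minimal `ψ` has `ψ s ≠ 0` at a sink `s`, then `ψ s • 1_s + B ψ ≤ ψ`, so the series
`∑ₙ (Bⁿ)_{vs}` converge, and `ψ` dominates `ψ s` times their sum `G`, hence is a multiple of `G` by
minimality. Otherwise `ψ` is harmonic. Take a class `C` in the support of `ψ` from which no other
class of the support can be reached. The vectors `Bⁿ (1_C ψ)` increase to a harmonic vector below
`ψ` that agrees with `ψ` on `C`, so they converge to `ψ`. Hence the support of `ψ` is the closure of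
`C`, `ψ` is a positive eigenvector on `C`, and `Bⁿ (ψ - 1_C ψ) → 0` forces the spectral radius off
`C` below `1`.

Conversely, `φ^s` and `φ^C` are minimal because harmonic vectors dominated by `φ^s` and vanishing at
`s` are zero, and because harmonic vectors supported on the closure of `C` are determined up to a
scalar. The existence of `φ^C` rests on a Perron vector of `C`, extended by solving a Dirichlet
problem.
-/

section SpectralRadius

open scoped Topology

variable {l m n : Type*} [Fintype l] [Fintype m] [Fintype n]

/-- The entrywise `ℓ¹` norm of a real matrix, the norm in terms of which `specRad` is defined. -/
def l1Norm (M : Matrix m n ℝ) : ℝ := ∑ i, ∑ j, |M i j|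

lemma l1Norm_nonneg (M : Matrix m n ℝ) : 0 ≤ l1Norm M :=
  sum_nonneg fun _ _ => sum_nonneg fun _ _ => abs_nonneg _

lemma abs_apply_le_l1Norm (M : Matrix m n ℝ) (i : m) (j : n) : |M i j| ≤ l1Norm M :=
  calc |M i j| ≤ ∑ j, |M i j| :=
        single_le_sum (f := fun j => |M i j|) (fun _ _ => abs_nonneg _) (mem_univ j)
    _ ≤ l1Norm M := single_le_sum (f := fun i => ∑ j, |M i j|)
        (fun _ _ => sum_nonneg fun _ _ => abs_nonneg _) (mem_univ i)

lemma l1Norm_mul_le (M : Matrix l m ℝ) (N : Matrix m n ℝ) :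
    l1Norm (M * N) ≤ l1Norm M * l1Norm N := by
  have row_le (k : m) : ∑ j, |N k j| ≤ l1Norm N :=
    single_le_sum (f := fun k => ∑ j, |N k j|) (fun _ _ => sum_nonneg fun _ _ => abs_nonneg _)
      (mem_univ k)
  calc l1Norm (M * N) ≤ ∑ i, ∑ j, ∑ k, |M i k| * |N k j| := by
        refine sum_le_sum fun i _ => sum_le_sum fun j _ => ?_
        simpa only [Matrix.mul_apply, abs_mul] using
          abs_sum_le_sum_abs (fun k => M i k * N k j) univ
    _ = ∑ i, ∑ k, |M i k| * ∑ j, |N k j| := by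
        simp only [mul_sum]
        exact sum_congr rfl fun i _ => sum_comm
    _ ≤ ∑ i, ∑ k, |M i k| * l1Norm N :=
        sum_le_sum fun i _ => sum_le_sum fun k _ =>
          mul_le_mul_of_nonneg_left (row_le k) (abs_nonneg _)
    _ = l1Norm M * l1Norm N := by simp only [l1Norm, sum_mul]

variable [DecidableEq n]

lemma l1Norm_pow_le (M : Matrix n n ℝ) {k : ℕ} (hk : k ≠ 0) : l1Norm (M ^ k) ≤ l1Norm M ^ k := by
  induction k with
  | zero => exact absurd rfl hk
  | succ k ih =>
    obtain rfl | hk := eq_or_ne k 0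
    · simp
    · calc l1Norm (M ^ (k + 1)) ≤ l1Norm (M ^ k) * l1Norm M := by
            rw [pow_succ]
            exact l1Norm_mul_le _ _
        _ ≤ l1Norm M ^ k * l1Norm M := mul_le_mul_of_nonneg_right (ih hk) (l1Norm_nonneg M)
        _ = l1Norm M ^ (k + 1) := (pow_succ _ k).symm

lemma isBoundedUnder_le_root_l1Norm_pow (M : Matrix n n ℝ) :
    IsBoundedUnder (· ≤ ·) atTop fun k : ℕ => l1Norm (M ^ k) ^ (1 / (k : ℝ)) := by
  refine isBoundedUnder_of_eventually_le (a := l1Norm M) ?_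
  filter_upwards [eventually_ne_atTop 0] with k hk
  calc l1Norm (M ^ k) ^ (1 / (k : ℝ)) ≤ (l1Norm M ^ k) ^ (1 / (k : ℝ)) :=
        Real.rpow_le_rpow (l1Norm_nonneg _) (l1Norm_pow_le M hk) (by positivity)
    _ = l1Norm M := by rw [one_div, Real.pow_rpow_inv_natCast (l1Norm_nonneg M) hk]

lemma isCoboundedUnder_le_root_l1Norm_pow (M : Matrix n n ℝ) :
    IsCoboundedUnder (· ≤ ·) atTop fun k : ℕ => l1Norm (M ^ k) ^ (1 / (k : ℝ)) :=
  (isBoundedUnder_of ⟨0, fun _ => Real.rpow_nonneg (l1Norm_nonneg _) _⟩).isCoboundedUnder_le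

lemma tendsto_root_const_mul_pow {K r : ℝ} (hK : 0 < K) (hr : 0 ≤ r) :
    Tendsto (fun k : ℕ => (K * r ^ k) ^ (1 / (k : ℝ))) atTop (𝓝 r) := by
  have hroot : Tendsto (fun k : ℕ => K ^ (1 / (k : ℝ)) * r) atTop (𝓝 (K ^ (0 : ℝ) * r)) :=
    ((Real.continuousAt_const_rpow hK.ne').tendsto.comp
      (tendsto_one_div_atTop_nhds_zero_nat (𝕜 := ℝ))).mul_const r
  rw [Real.rpow_zero, one_mul] at hroot
  refine hroot.congr' ?_
  filter_upwards [eventually_ne_atTop 0] with k hk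
  rw [Real.mul_rpow hK.le (pow_nonneg hr k), one_div, Real.pow_rpow_inv_natCast hr hk]

lemma specRad_le_of_l1Norm_pow_le {M : Matrix n n ℝ} {K r : ℝ} (hK : 0 < K) (hr : 0 ≤ r)
    (h : ∀ k, l1Norm (M ^ k) ≤ K * r ^ k) : specRad M ≤ r := by
  have hlim := tendsto_root_const_mul_pow hK hr
  rw [← hlim.limsup_eq]
  refine limsup_le_limsup (Eventually.of_forall fun k => ?_)
    (isCoboundedUnder_le_root_l1Norm_pow M) hlim.isBoundedUnder_le
  exact Real.rpow_le_rpow (l1Norm_nonneg _) (h k) (by positivity)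

lemma le_specRad_of_le_l1Norm_pow {M : Matrix n n ℝ} {c r : ℝ} (hc : 0 < c) (hr : 0 ≤ r)
    (h : ∀ k, c * r ^ k ≤ l1Norm (M ^ k)) : r ≤ specRad M := by
  have hlim := tendsto_root_const_mul_pow hc hr
  rw [← hlim.limsup_eq]
  refine limsup_le_limsup (Eventually.of_forall fun k => ?_)
    hlim.isBoundedUnder_ge.isCoboundedUnder_le (isBoundedUnder_le_root_l1Norm_pow M)
  exact Real.rpow_le_rpow (by positivity) (h k) (by positivity)

lemma specRad_nonneg (M : Matrix n n ℝ) : 0 ≤ specRad M :=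
  le_limsup_of_frequently_le
    (Frequently.of_forall fun _ => Real.rpow_nonneg (l1Norm_nonneg _) _)
    (isBoundedUnder_le_root_l1Norm_pow M)

lemma eventually_l1Norm_pow_le_of_specRad_lt {M : Matrix n n ℝ} {r : ℝ} (h : specRad M < r) :
    ∀ᶠ k : ℕ in atTop, l1Norm (M ^ k) ≤ r ^ k := by
  filter_upwards [eventually_lt_of_limsup_lt h (isBoundedUnder_le_root_l1Norm_pow M),
    eventually_ne_atTop 0] with k hlt hk
  calc l1Norm (M ^ k) = (l1Norm (M ^ k) ^ (1 / (k : ℝ))) ^ k := by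
        rw [one_div, Real.rpow_inv_natCast_pow (l1Norm_nonneg _) hk]
    _ ≤ r ^ k := pow_le_pow_left₀ (Real.rpow_nonneg (l1Norm_nonneg _) _) hlt.le k

lemma summable_inv_smul_pow_of_specRad_lt {M : Matrix n n ℝ} {r : ℝ} (h : specRad M < r) :
    Summable fun k : ℕ => (r⁻¹ • M) ^ k := by
  obtain ⟨s, hs, hsr⟩ := exists_between h
  have hs0 : 0 ≤ s := (specRad_nonneg M).trans hs.le
  have hr : 0 < r := hs0.trans_lt hsr
  have hgeom : Summable fun k : ℕ => (s / r) ^ k :=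
    summable_geometric_of_lt_one (by positivity) ((div_lt_one hr).2 hsr)
  refine Pi.summable.2 fun i => Pi.summable.2 fun j => ?_
  refine Summable.of_norm_bounded_eventually_nat hgeom ?_
  filter_upwards [eventually_l1Norm_pow_le_of_specRad_lt hs] with k hk
  calc ‖((r⁻¹ • M) ^ k) i j‖ = (r⁻¹) ^ k * |(M ^ k) i j| := by
        rw [smul_pow, Matrix.smul_apply, smul_eq_mul, Real.norm_eq_abs, abs_mul,
          abs_of_nonneg (by positivity)]
    _ ≤ (r⁻¹) ^ k * s ^ k := by
        gcongr
        exact (abs_apply_le_l1Norm _ i j).trans hk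
    _ = (s / r) ^ k := by rw [← mul_pow, div_eq_inv_mul]

lemma summable_pow_of_specRad_lt_one {M : Matrix n n ℝ} (h : specRad M < 1) :
    Summable fun k : ℕ => M ^ k := by
  simpa using summable_inv_smul_pow_of_specRad_lt h

end SpectralRadius

section NonnegMatrix

open scoped Matrix Topology

variable {m n : Type*} [Fintype n]

lemma mulVec_nonneg {M : Matrix m n ℝ} (hM : ∀ i j, 0 ≤ M i j) {x : n → ℝ} (hx : 0 ≤ x) :
    0 ≤ M *ᵥ x :=
  fun i => dotProduct_nonneg_of_nonneg (hM i) hx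

lemma mulVec_le_mulVec {M : Matrix m n ℝ} (hM : ∀ i j, 0 ≤ M i j) {x y : n → ℝ} (hxy : x ≤ y) :
    M *ᵥ x ≤ M *ᵥ y :=
  fun i => dotProduct_le_dotProduct_of_nonneg_left hxy (hM i)

lemma apply_mul_le_mulVec {M : Matrix m n ℝ} (hM : ∀ i j, 0 ≤ M i j) {x : n → ℝ} (hx : 0 ≤ x)
    (i : m) (j : n) : M i j * x j ≤ (M *ᵥ x) i :=
  single_le_sum (f := fun j => M i j * x j) (fun j _ => mul_nonneg (hM i j) (hx j)) (mem_univ j)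

variable [DecidableEq n] {M : Matrix n n ℝ} {x : n → ℝ} {r : ℝ}

lemma pow_succ_mulVec (M : Matrix n n ℝ) (k : ℕ) (x : n → ℝ) :
    M ^ (k + 1) *ᵥ x = M *ᵥ (M ^ k *ᵥ x) := by
  rw [pow_succ', Matrix.mulVec_mulVec]

lemma pow_mulVec_eq_self (h : M *ᵥ x = x) (k : ℕ) : M ^ k *ᵥ x = x := by
  induction k with
  | zero => simp
  | succ k ih => rw [pow_succ_mulVec, ih, h]

lemma pow_mulVec_le (hM : ∀ i j, 0 ≤ M i j) (hr : 0 ≤ r) (h : M *ᵥ x ≤ r • x) (k : ℕ) :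
    M ^ k *ᵥ x ≤ r ^ k • x := by
  induction k with
  | zero => simp
  | succ k ih =>
    calc M ^ (k + 1) *ᵥ x = M *ᵥ (M ^ k *ᵥ x) := pow_succ_mulVec M k x
      _ ≤ M *ᵥ (r ^ k • x) := mulVec_le_mulVec hM ih
      _ = r ^ k • (M *ᵥ x) := Matrix.mulVec_smul _ _ _
      _ ≤ r ^ k • (r • x) := smul_le_smul_of_nonneg_left h (pow_nonneg hr k)
      _ = r ^ (k + 1) • x := by rw [smul_smul, pow_succ]

lemma le_pow_mulVec (hM : ∀ i j, 0 ≤ M i j) (hr : 0 ≤ r) (h : r • x ≤ M *ᵥ x) (k : ℕ) :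
    r ^ k • x ≤ M ^ k *ᵥ x := by
  induction k with
  | zero => simp
  | succ k ih =>
    calc r ^ (k + 1) • x = r ^ k • (r • x) := by rw [smul_smul, pow_succ]
      _ ≤ r ^ k • (M *ᵥ x) := smul_le_smul_of_nonneg_left h (pow_nonneg hr k)
      _ = M *ᵥ (r ^ k • x) := (Matrix.mulVec_smul _ _ _).symm
      _ ≤ M *ᵥ (M ^ k *ᵥ x) := mulVec_le_mulVec hM ih
      _ = M ^ (k + 1) *ᵥ x := (pow_succ_mulVec M k x).symm

lemma specRad_le_of_mulVec_le (hM : ∀ i j, 0 ≤ M i j) (hx : ∀ i, 0 < x i) (hr : 0 ≤ r)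
    (h : M *ᵥ x ≤ r • x) : specRad M ≤ r := by
  have hratio (i j : n) : 0 ≤ x i / x j := div_nonneg (hx i).le (hx j).le
  have hsum : 0 ≤ ∑ i, ∑ j, x i / x j := sum_nonneg fun i _ => sum_nonneg fun j _ => hratio i j
  refine specRad_le_of_l1Norm_pow_le (K := 1 + ∑ i, ∑ j, x i / x j) (by positivity) hr fun k => ?_
  have hentry (i j : n) : |(M ^ k) i j| ≤ x i / x j * r ^ k := by
    have hle := (apply_mul_le_mulVec (Matrix.pow_apply_nonneg hM k) (fun i => (hx i).le) i j).trans
      (pow_mulVec_le hM hr h k i)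
    rw [Pi.smul_apply, smul_eq_mul] at hle
    rwa [abs_of_nonneg (Matrix.pow_apply_nonneg hM k i j), div_mul_eq_mul_div,
      le_div_iff₀ (hx j), mul_comm (x i)]
  calc l1Norm (M ^ k) ≤ ∑ i, ∑ j, x i / x j * r ^ k :=
        sum_le_sum fun i _ => sum_le_sum fun j _ => hentry i j
    _ = (∑ i, ∑ j, x i / x j) * r ^ k := by simp only [sum_mul]
    _ ≤ (1 + ∑ i, ∑ j, x i / x j) * r ^ k := by gcongr; linarith

lemma le_specRad_of_le_mulVec (hM : ∀ i j, 0 ≤ M i j) (hx : 0 ≤ x) (hx0 : x ≠ 0) (hr : 0 ≤ r)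
    (h : r • x ≤ M *ᵥ x) : r ≤ specRad M := by
  obtain ⟨i, hi⟩ : ∃ i, 0 < x i := (Pi.lt_def.1 (lt_of_le_of_ne hx hx0.symm)).2
  have hsum : 0 < ∑ j, x j := sum_pos' (fun j _ => hx j) ⟨i, mem_univ i, hi⟩
  refine le_specRad_of_le_l1Norm_pow (c := x i / ∑ j, x j) (by positivity) hr fun k => ?_
  rw [div_mul_eq_mul_div, div_le_iff₀ hsum]
  calc x i * r ^ k = (r ^ k • x) i := mul_comm _ _
    _ ≤ (M ^ k *ᵥ x) i := le_pow_mulVec hM hr h k i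
    _ ≤ ∑ j, l1Norm (M ^ k) * x j := sum_le_sum fun j _ =>
        mul_le_mul_of_nonneg_right ((le_abs_self _).trans (abs_apply_le_l1Norm _ i j)) (hx j)
    _ = l1Norm (M ^ k) * ∑ j, x j := (mul_sum _ _ _).symm

lemma specRad_lt_of_mulVec_lt [Nonempty n] (hM : ∀ i j, 0 ≤ M i j) (hx : 0 ≤ x)
    (h : ∀ i, (M *ᵥ x) i < r * x i) : specRad M < r := by
  have hrx (i : n) : 0 < r * x i := (mulVec_nonneg hM hx i).trans_lt (h i)
  have hx_pos (i : n) : 0 < x i := (hx i).lt_of_ne fun hi => (hrx i).ne' (by simp [← hi])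
  have hr : 0 < r := pos_of_mul_pos_left (hrx (Classical.arbitrary n)) (hx _)
  have hev : ∀ᶠ s in 𝓝 r, 0 < s ∧ ∀ i, (M *ᵥ x) i < s * x i :=
    (eventually_gt_nhds hr).and <| eventually_all.2 fun i =>
      (tendsto_id.mul_const (x i)).eventually (eventually_gt_nhds (h i))
  obtain ⟨s, ⟨hs0, hs⟩, hsr⟩ :=
    ((hev.filter_mono nhdsWithin_le_nhds).and self_mem_nhdsWithin).exists (f := 𝓝[<] r)
  exact (specRad_le_of_mulVec_le hM hx_pos hs0.le fun i => (hs i).le).trans_lt hsr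

lemma specRad_eq_of_mulVec_eq_smul [Nonempty n] (hM : ∀ i j, 0 ≤ M i j) (hx : ∀ i, 0 < x i)
    (h : M *ᵥ x = r • x) : specRad M = r := by
  have hx_nonneg : 0 ≤ x := fun i => (hx i).le
  let i := Classical.arbitrary n
  have hr : 0 ≤ r := nonneg_of_mul_nonneg_left
    ((mulVec_nonneg hM hx_nonneg i).trans_eq (congrFun h i)) (hx i)
  exact (specRad_le_of_mulVec_le hM hx hr h.le).antisymm
    (le_specRad_of_le_mulVec hM hx_nonneg (fun h0 => (hx i).ne' (congrFun h0 i)) hr h.ge)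

lemma exists_nonneg_eq_add_mulVec (hM : ∀ i j, 0 ≤ M i j) (hsum : Summable fun k : ℕ => M ^ k)
    {b : n → ℝ} (hb : 0 ≤ b) : ∃ y, 0 ≤ y ∧ y = b + M *ᵥ y := by
  have htsum_nonneg (i j : n) : 0 ≤ (∑' k : ℕ, M ^ k) i j :=
    (Pi.hasSum.1 (Pi.hasSum.1 hsum.hasSum i) j).nonneg fun k => Matrix.pow_apply_nonneg hM k i j
  refine ⟨(∑' k : ℕ, M ^ k) *ᵥ b, mulVec_nonneg htsum_nonneg hb, ?_⟩
  have hinv := congrArg (· *ᵥ b) hsum.one_sub_mul_tsum_pow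
  simp only [← Matrix.mulVec_mulVec, Matrix.sub_mulVec, Matrix.one_mulVec] at hinv
  exact sub_eq_iff_eq_add.1 hinv

lemma eq_zero_of_mulVec_eq_self_of_summable_pow (hsum : Summable fun k : ℕ => M ^ k)
    (h : M *ᵥ x = x) : x = 0 := by
  have hinv := congrArg (· *ᵥ x) hsum.tsum_pow_mul_one_sub
  simpa [← Matrix.mulVec_mulVec, Matrix.sub_mulVec, h] using hinv.symm

/- Normalise the resolvent `y = (1 - r⁻¹M)⁻¹ 1`: since `(M y)ᵢ ≥ ρ yᵢ` for some `i`, the norm of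
`y` is at least `r / (r - ρ)`. -/
lemma exists_mem_stdSimplex_norm_mulVec_sub_le [Nonempty n] (hM : ∀ i j, 0 ≤ M i j)
    (hr : specRad M < r) :
    ∃ x ∈ stdSimplex ℝ n, ‖M *ᵥ x - specRad M • x‖ ≤ r - specRad M := by
  set ρ := specRad M
  have hr0 : 0 < r := (specRad_nonneg M).trans_lt hr
  obtain ⟨y, hy, hy_eq⟩ := exists_nonneg_eq_add_mulVec (M := r⁻¹ • M)
    (fun i j => mul_nonneg (inv_nonneg.2 hr0.le) (hM i j))
    (summable_inv_smul_pow_of_specRad_lt hr) (zero_le_one' (n → ℝ))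
  have hMy (i : n) : (M *ᵥ y) i = r * y i - r := by
    have := congrFun hy_eq i
    simp only [Matrix.smul_mulVec, Pi.add_apply, Pi.one_apply, Pi.smul_apply, smul_eq_mul] at this
    field_simp at this
    linarith
  have hle_sum (i : n) : y i ≤ ∑ j, y j := single_le_sum (fun j _ => hy j) (mem_univ i)
  have hr_le : r ≤ (r - ρ) * ∑ j, y j := by
    obtain ⟨i, hi⟩ : ∃ i, ρ * y i ≤ (M *ᵥ y) i := by
      by_contra! hlt
      exact (specRad_lt_of_mulVec_lt hM hy hlt).false
    rw [hMy] at hi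
    nlinarith [hle_sum i]
  have hsum : 0 < ∑ j, y j := pos_of_mul_pos_right (hr0.trans_le hr_le) (sub_nonneg.2 hr.le)
  refine ⟨(∑ j, y j)⁻¹ • y, ⟨fun i => mul_nonneg (inv_nonneg.2 hsum.le) (hy i), ?_⟩, ?_⟩
  · simp [← mul_sum, hsum.ne']
  · refine (pi_norm_le_iff_of_nonneg (sub_nonneg.2 hr.le)).2 fun i => ?_
    have hval : (M *ᵥ ((∑ j, y j)⁻¹ • y) - ρ • (∑ j, y j)⁻¹ • y) i
        = ((r - ρ) * y i - r) / ∑ j, y j := by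
      rw [Matrix.mulVec_smul, Pi.sub_apply, Pi.smul_apply, hMy]
      simp only [Pi.smul_apply, smul_eq_mul]
      ring
    rw [hval, Real.norm_eq_abs, abs_le, le_div_iff₀ hsum, div_le_iff₀ hsum]
    constructor <;> nlinarith [hle_sum i, mul_nonneg (sub_nonneg.2 hr.le) (hy i)]

theorem exists_mem_stdSimplex_mulVec_eq_specRad_smul [Nonempty n] (hM : ∀ i j, 0 ≤ M i j) :
    ∃ x ∈ stdSimplex ℝ n, M *ᵥ x = specRad M • x := by
  have hcont : Continuous fun x : n → ℝ => ‖M *ᵥ x - specRad M • x‖ := by fun_prop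
  obtain ⟨x, hx, hmin⟩ := (isCompact_stdSimplex ℝ n).exists_isMinOn
    ⟨_, single_mem_stdSimplex ℝ (Classical.arbitrary n)⟩ hcont.continuousOn
  refine ⟨x, hx, sub_eq_zero.1 <| norm_le_zero_iff.1 <| le_of_forall_pos_le_add fun ε hε => ?_⟩
  obtain ⟨z, hz, hle⟩ := exists_mem_stdSimplex_norm_mulVec_sub_le hM (r := specRad M + ε)
    (lt_add_of_pos_right _ hε)
  simpa using (isMinOn_iff.1 hmin z hz).trans hle

end NonnegMatrix

section Iteration

open scoped Matrix Topology

variable {n : Type*} [Fintype n] [DecidableEq n] {M : Matrix n n ℝ} {b g u x : n → ℝ}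

lemma sum_range_succ_pow_mulVec (M : Matrix n n ℝ) (b : n → ℝ) (N : ℕ) :
    ∑ k ∈ range (N + 1), M ^ k *ᵥ b = b + M *ᵥ ∑ k ∈ range N, M ^ k *ᵥ b := by
  simp only [sum_range_succ', pow_succ_mulVec, Matrix.mulVec_sum, pow_zero, Matrix.one_mulVec,
    add_comm]

lemma sum_range_pow_mulVec_le (hM : ∀ i j, 0 ≤ M i j) (hx : 0 ≤ x) (h : b + M *ᵥ x ≤ x) (N : ℕ) :
    ∑ k ∈ range N, M ^ k *ᵥ b ≤ x := by
  induction N with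
  | zero => simpa using hx
  | succ N ih =>
    rw [sum_range_succ_pow_mulVec]
    exact (add_le_add_right (mulVec_le_mulVec hM ih) b).trans h

lemma eq_add_mulVec_of_hasSum_pow_mulVec (h : HasSum (fun k : ℕ => M ^ k *ᵥ b) x) :
    x = b + M *ᵥ x := by
  have hlim := h.tendsto_sum_nat
  refine tendsto_nhds_unique (hlim.comp (tendsto_add_atTop_nat 1)) ?_
  simp only [Function.comp_def, sum_range_succ_pow_mulVec]
  exact tendsto_const_nhds.add
    (((continuous_const.matrix_mulVec continuous_id).tendsto x).comp hlim)

lemma tendsto_pow_mulVec_zero_of_hasSum (h : HasSum (fun k : ℕ => M ^ k *ᵥ b) x) :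
    Tendsto (fun N : ℕ => M ^ N *ᵥ x) atTop (𝓝 0) := by
  have htail (N : ℕ) : M ^ N *ᵥ x = x - ∑ k ∈ range N, M ^ k *ᵥ b := by
    induction N with
    | zero => simp
    | succ N ih =>
      rw [pow_succ_mulVec, ih, sum_range_succ_pow_mulVec, Matrix.mulVec_sub]
      nth_rw 2 [eq_add_mulVec_of_hasSum_pow_mulVec h]
      abel
  simpa only [htail, sub_self] using h.tendsto_sum_nat.const_sub x

lemma eq_zero_of_mulVec_eq_self_of_tendsto (hM : ∀ i j, 0 ≤ M i j) (hu : M *ᵥ u = u)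
    (hug : |u| ≤ g) (hg : Tendsto (fun N : ℕ => M ^ N *ᵥ g) atTop (𝓝 0)) : u = 0 := by
  have hle (N : ℕ) : u ≤ M ^ N *ᵥ g ∧ -u ≤ M ^ N *ᵥ g := by
    have hu_neg : M *ᵥ -u = -u := by rw [Matrix.mulVec_neg, hu]
    have hpow := mulVec_le_mulVec (Matrix.pow_apply_nonneg hM N) (abs_le'.1 hug).1
    have hpow_neg := mulVec_le_mulVec (Matrix.pow_apply_nonneg hM N) (abs_le'.1 hug).2
    rw [pow_mulVec_eq_self hu] at hpow
    rw [pow_mulVec_eq_self hu_neg] at hpow_neg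
    exact ⟨hpow, hpow_neg⟩
  exact le_antisymm (ge_of_tendsto' hg fun N => (hle N).1)
    (neg_nonpos.1 (ge_of_tendsto' hg fun N => (hle N).2))

lemma exists_tendsto_pow_mulVec (hM : ∀ i j, 0 ≤ M i j) (hg : g ≤ M *ᵥ g) (hgx : g ≤ x)
    (hx : M *ᵥ x ≤ x) :
    ∃ χ, Tendsto (fun k : ℕ => M ^ k *ᵥ g) atTop (𝓝 χ) ∧ M *ᵥ χ = χ ∧ g ≤ χ ∧ χ ≤ x := by
  have hmono : Monotone fun k : ℕ => M ^ k *ᵥ g := monotone_nat_of_le_succ fun k => by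
    rw [pow_succ, ← Matrix.mulVec_mulVec]
    exact mulVec_le_mulVec (Matrix.pow_apply_nonneg hM k) hg
  have hle (k : ℕ) : M ^ k *ᵥ g ≤ x :=
    (mulVec_le_mulVec (Matrix.pow_apply_nonneg hM k) hgx).trans
      (by simpa using pow_mulVec_le hM zero_le_one (by simpa using hx) k)
  have hlim : Tendsto (fun k : ℕ => M ^ k *ᵥ g) atTop (𝓝 fun i => ⨆ k, (M ^ k *ᵥ g) i) :=
    tendsto_pi_nhds.2 fun i => tendsto_atTop_ciSup (fun _ _ hkl => hmono hkl i)
      ⟨x i, Set.forall_mem_range.2 fun k => hle k i⟩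
  refine ⟨_, hlim, ?_, by simpa using hmono.ge_of_tendsto hlim 0, le_of_tendsto' hlim hle⟩
  refine tendsto_nhds_unique ?_ (hlim.comp (tendsto_add_atTop_nat 1))
  simp only [Function.comp_def, pow_succ_mulVec]
  exact ((continuous_const.matrix_mulVec continuous_id).tendsto _).comp hlim

end Iteration

section SpectralRadiusOn

open scoped Matrix Topology

lemma exists_support_subset_domRestrict_eq {α : Type*} {S : Set α} (x : S → ℝ) :
    ∃ y : α → ℝ, y.support ⊆ S ∧ S.domRestrict y = x := by
  classical
  refine ⟨fun v => if h : v ∈ S then x ⟨v, h⟩ else 0, fun v hv => ?_, funext fun v => ?_⟩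
  · by_contra hvS
    simp [hvS] at hv
  · simp

lemma nonneg_of_domRestrict_nonneg {α : Type*} {S : Set α} {x : α → ℝ} (hx : x.support ⊆ S)
    (h : 0 ≤ S.domRestrict x) : 0 ≤ x := fun v => by
  by_cases hv : v ∈ S
  · exact h ⟨v, hv⟩
  · exact (Function.notMem_support.1 fun hv' => hv (hx hv')).ge

variable {B : Matrix V V ℝ} {S : Set V} {x : V → ℝ}

lemma specRadOn_eq_specRad_submatrix (B : Matrix V V ℝ) (S : Set V) [Fintype S] [DecidableEq S] :
    specRadOn B S = specRad (B.submatrix ((↑) : S → V) (↑)) := by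
  rw [specRadOn, Subsingleton.elim (Set.toFinite S).fintype ‹Fintype S›,
    Subsingleton.elim (Classical.decEq S) ‹DecidableEq S›]
  rfl

lemma submatrix_mulVec_domRestrict (B : Matrix V V ℝ) (S : Set V) [Fintype S] (x : V → ℝ) :
    B.submatrix ((↑) : S → V) (↑) *ᵥ S.domRestrict x = S.domRestrict (B *ᵥ S.indicator x) := by
  classical
  ext v
  calc ∑ w : S, B v w * x w = ∑ w ∈ S.toFinset, B v w * x w :=
        sum_set_coe (f := fun w => B v w * x w) S
    _ = ∑ w, B v w * S.indicator x w := by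
        simp only [Set.indicator_apply, mul_ite, mul_zero, ← sum_filter]
        congr! 1
        ext
        simp

lemma specRadOn_empty (B : Matrix V V ℝ) : specRadOn B ∅ = 0 := by
  classical
  rw [specRadOn_eq_specRad_submatrix]
  exact (specRad_le_of_mulVec_le (x := 0) isEmptyElim isEmptyElim le_rfl isEmptyElim).antisymm
    (specRad_nonneg _)

lemma specRadOn_eq_of_mulVec_eq (hB : ∀ v w, 0 ≤ B v w) (hS : S.Nonempty) {r : ℝ}
    (hx : x.support ⊆ S) (hx_pos : ∀ v ∈ S, 0 < x v) (h : ∀ v ∈ S, (B *ᵥ x) v = r * x v) :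
    specRadOn B S = r := by
  classical
  have := hS.to_subtype
  rw [specRadOn_eq_specRad_submatrix]
  refine specRad_eq_of_mulVec_eq_smul (x := S.domRestrict x) (fun i j => hB i j)
    (fun v => hx_pos v v.2) ?_
  rw [submatrix_mulVec_domRestrict, Set.indicator_eq_self.2 hx]
  exact funext fun v => h v v.2

lemma specRadOn_lt_of_mulVec_lt (hB : ∀ v w, 0 ≤ B v w) (hS : S.Nonempty) {r : ℝ}
    (hx : 0 ≤ x) (h : ∀ v ∈ S, (B *ᵥ x) v < r * x v) : specRadOn B S < r := by
  classical
  have := hS.to_subtype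
  rw [specRadOn_eq_specRad_submatrix]
  refine specRad_lt_of_mulVec_lt (x := S.domRestrict x) (fun i j => hB i j) (fun v => hx v)
    fun v => ?_
  rw [submatrix_mulVec_domRestrict]
  exact (mulVec_le_mulVec hB (Set.indicator_le_self' fun w _ => hx w) v).trans_lt (h v v.2)

lemma exists_mulVec_eq_specRadOn_smul (hB : ∀ v w, 0 ≤ B v w) (hS : S.Nonempty) :
    ∃ x : V → ℝ, 0 ≤ x ∧ x ≠ 0 ∧ x.support ⊆ S ∧ ∀ v ∈ S, (B *ᵥ x) v = specRadOn B S * x v := by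
  classical
  have := hS.to_subtype
  obtain ⟨x', ⟨hx_nonneg, hx_sum⟩, hx_eq⟩ := exists_mem_stdSimplex_mulVec_eq_specRad_smul
    (M := B.submatrix ((↑) : S → V) (↑)) fun i j => hB i j
  obtain ⟨x, hx_supp, rfl⟩ := exists_support_subset_domRestrict_eq x'
  rw [submatrix_mulVec_domRestrict, Set.indicator_eq_self.2 hx_supp,
    ← specRadOn_eq_specRad_submatrix] at hx_eq
  refine ⟨x, nonneg_of_domRestrict_nonneg hx_supp hx_nonneg, ?_, hx_supp,
    fun v hv => congrFun hx_eq ⟨v, hv⟩⟩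
  rintro rfl
  simp at hx_sum

lemma exists_nonneg_eq_add_mulVec_of_specRadOn_lt_one (hB : ∀ v w, 0 ≤ B v w)
    (hS : specRadOn B S < 1) {b : V → ℝ} (hb : 0 ≤ b) :
    ∃ y : V → ℝ, 0 ≤ y ∧ y.support ⊆ S ∧ ∀ v ∈ S, y v = b v + (B *ᵥ y) v := by
  classical
  rw [specRadOn_eq_specRad_submatrix] at hS
  obtain ⟨y', hy_nonneg, hy_eq⟩ := exists_nonneg_eq_add_mulVec
    (M := B.submatrix ((↑) : S → V) (↑)) (b := S.domRestrict b) (fun i j => hB i j)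
    (summable_pow_of_specRad_lt_one hS) fun v => hb v
  obtain ⟨y, hy_supp, rfl⟩ := exists_support_subset_domRestrict_eq y'
  rw [submatrix_mulVec_domRestrict, Set.indicator_eq_self.2 hy_supp] at hy_eq
  exact ⟨y, nonneg_of_domRestrict_nonneg hy_supp hy_nonneg, hy_supp,
    fun v hv => congrFun hy_eq ⟨v, hv⟩⟩

lemma eq_zero_of_mulVec_eq_of_specRadOn_lt_one (hS : specRadOn B S < 1) (hx : x.support ⊆ S)
    (h : ∀ v ∈ S, (B *ᵥ x) v = x v) : x = 0 := by
  classical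
  rw [specRadOn_eq_specRad_submatrix] at hS
  have hx_eq : B.submatrix ((↑) : S → V) (↑) *ᵥ S.domRestrict x = S.domRestrict x := by
    rw [submatrix_mulVec_domRestrict, Set.indicator_eq_self.2 hx]
    exact funext fun v => h v v.2
  have hx_zero :=
    eq_zero_of_mulVec_eq_self_of_summable_pow (summable_pow_of_specRad_lt_one hS) hx_eq
  rw [← Set.indicator_eq_self.2 hx]
  exact Set.indicator_eq_zero.2 (Set.disjoint_left.2 fun v hv hvS =>
    hv (congrFun hx_zero ⟨v, hvS⟩))

lemma specRadOn_lt_one_of_tendsto_pow_mulVec [DecidableEq V] (hB : ∀ v w, 0 ≤ B v w)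
    (hS : S.Nonempty) {d : V → ℝ} (hd : 0 ≤ d) (hd_pos : ∀ v ∈ S, 0 < d v)
    (hlim : Tendsto (fun k : ℕ => B ^ k *ᵥ d) atTop (𝓝 0)) : specRadOn B S < 1 := by
  obtain ⟨N, hN⟩ : ∃ N : ℕ, ∀ v ∈ S, (B ^ N *ᵥ d) v < d v :=
    (eventually_all.2 fun v => eventually_imp_distrib_left.2 fun hv =>
      (tendsto_pi_nhds.1 hlim v).eventually (eventually_lt_nhds (hd_pos v hv))).exists
  set x := ∑ k ∈ range N, B ^ k *ᵥ d with hx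
  have hBx : d + B *ᵥ x = x + B ^ N *ᵥ d := by
    rw [hx, ← sum_range_succ_pow_mulVec, sum_range_succ]
  refine specRadOn_lt_of_mulVec_lt hB hS (x := x)
    (sum_nonneg fun k _ => mulVec_nonneg (Matrix.pow_apply_nonneg hB k) hd) fun v hv => ?_
  have hBx_v := congrFun hBx v
  simp only [Pi.add_apply] at hBx_v
  linarith [hN v hv]

end SpectralRadiusOn

section Reachability

open scoped Matrix

variable {B : Matrix V V ℝ} {C F : Set V} {u v w : V} {x : V → ℝ}

lemma isHarmonic_iff_mulVec_eq_self : IsHarmonic B x ↔ B *ᵥ x = x := funext_iff.symm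

lemma mulVec_apply_eq_zero (h : ∀ w, B v w ≠ 0 → x w = 0) : (B *ᵥ x) v = 0 :=
  sum_eq_zero fun w _ => mul_eq_zero.2 (or_iff_not_imp_left.2 (h w))

lemma mulVec_indicator_apply_of_eq_zero (h : ∀ w ∉ C, x w ≠ 0 → B v w = 0) :
    (B *ᵥ C.indicator x) v = (B *ᵥ x) v := by
  refine sum_congr rfl fun w _ => ?_
  by_cases hw : w ∈ C
  · rw [Set.indicator_of_mem hw]
  · rw [Set.indicator_of_notMem hw, mul_zero, eq_comm, mul_eq_zero]
    exact or_iff_not_imp_right.2 (h w hw)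

variable [DecidableEq V]

namespace Reaches

lemma refl (B : Matrix V V ℝ) (v : V) : Reaches B v v := ⟨0, by simp⟩

lemma trans (hB : ∀ v w, 0 ≤ B v w) (huv : Reaches B u v) (hvw : Reaches B v w) :
    Reaches B u w := by
  obtain ⟨j, hj⟩ := huv
  obtain ⟨k, hk⟩ := hvw
  refine ⟨j + k, (mul_pos hj hk).trans_le ?_⟩
  rw [pow_add]
  exact apply_mul_le_mulVec (Matrix.pow_apply_nonneg hB j)
    (x := fun i => (B ^ k) i w) (fun i => Matrix.pow_apply_nonneg hB k i w) u v

lemma of_apply_ne_zero (hB : ∀ v w, 0 ≤ B v w) (h : B v w ≠ 0) : Reaches B v w :=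
  ⟨1, by simpa using (hB v w).lt_of_ne' h⟩

lemma pos_of_mulVec_le (hB : ∀ v w, 0 ≤ B v w) (hx : 0 ≤ x) (hBx : B *ᵥ x ≤ x)
    (h : Reaches B v w) (hw : 0 < x w) : 0 < x v := by
  obtain ⟨k, hk⟩ := h
  calc 0 < (B ^ k) v w * x w := mul_pos hk hw
    _ ≤ (B ^ k *ᵥ x) v := apply_mul_le_mulVec (Matrix.pow_apply_nonneg hB k) hx v w
    _ ≤ x v := by simpa using pow_mulVec_le hB zero_le_one (by simpa using hBx) k v

end Reaches

lemma subset_closureSet (B : Matrix V V ℝ) (F : Set V) : F ⊆ closureSet B F :=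
  fun v hv => ⟨v, hv, Reaches.refl B v⟩

lemma mem_closureSet_of_reaches (hB : ∀ v w, 0 ≤ B v w) (h : Reaches B v w)
    (hw : w ∈ closureSet B F) : v ∈ closureSet B F := by
  obtain ⟨u, hu, hwu⟩ := hw
  exact ⟨u, hu, h.trans hB hwu⟩

/-- `C` is an equivalence class of mutual reachability. This is `IsComponent` without the
requirement that `B` be nonzero on `C`, so a single vertex without a loop may form a class. -/
def IsCommunicatingClass (B : Matrix V V ℝ) (C : Set V) : Prop :=
  ∃ v, C = {w | Reaches B v w ∧ Reaches B w v}

namespace IsCommunicatingClass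

lemma nonempty (hC : IsCommunicatingClass B C) : C.Nonempty := by
  obtain ⟨v, rfl⟩ := hC
  exact ⟨v, Reaches.refl B v, Reaches.refl B v⟩

lemma reaches (hC : IsCommunicatingClass B C) (hB : ∀ v w, 0 ≤ B v w) (hv : v ∈ C) (hw : w ∈ C) :
    Reaches B v w := by
  obtain ⟨u, rfl⟩ := hC
  exact hv.2.trans hB hw.1

lemma mem_of_reaches (hC : IsCommunicatingClass B C) (hB : ∀ v w, 0 ≤ B v w) (hv : v ∈ C)
    (hvw : Reaches B v w) (hw : w ∈ closureSet B C) : w ∈ C := by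
  obtain ⟨u, rfl⟩ := hC
  obtain ⟨z, hz, hwz⟩ := hw
  exact ⟨hv.1.trans hB hvw, hwz.trans hB hz.2⟩

lemma mulVec_indicator_apply (hC : IsCommunicatingClass B C) (hB : ∀ v w, 0 ≤ B v w)
    (hx : x.support ⊆ closureSet B C) (hv : v ∈ C) :
    (B *ᵥ C.indicator x) v = (B *ᵥ x) v :=
  mulVec_indicator_apply_of_eq_zero fun _ hwC hw => by_contra fun hvw =>
    hwC (hC.mem_of_reaches hB hv (.of_apply_ne_zero hB hvw) (hx hw))

end IsCommunicatingClass

lemma exists_isCommunicatingClass_terminal (hB : ∀ v w, 0 ≤ B v w) {E : Set V} (hE : E.Nonempty)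
    (hE_back : ∀ v w, Reaches B v w → w ∈ E → v ∈ E) :
    ∃ C ⊆ E, IsCommunicatingClass B C ∧ ∀ v ∈ C, ∀ w ∈ E, Reaches B v w → w ∈ C := by
  obtain ⟨v, hvE, hmin⟩ := E.toFinite.exists_minimalFor (fun v => {w | Reaches B v w}) E hE
  refine ⟨{w | Reaches B v w ∧ Reaches B w v}, fun _ hw => hE_back _ v hw.2 hvE, ⟨v, rfl⟩,
    fun _ hw _ huE hwu => ⟨hw.1.trans hB hwu, ?_⟩⟩
  exact hmin huE (fun _ huz => (hw.1.trans hB hwu).trans hB huz) (Reaches.refl B v)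

end Reachability

section HarmonicComponents

open scoped Matrix

variable [DecidableEq V] {B : Matrix V V ℝ} {C : Set V} {x y φ : V → ℝ}

lemma IsPhiC.mulVec_eq_self (hφ : IsPhiC B C φ) : B *ᵥ φ = φ :=
  isHarmonic_iff_mulVec_eq_self.1 hφ.2.2.1

lemma IsPhiC.support_eq (hφ : IsPhiC B C φ) : φ.support = closureSet B C :=
  Set.ext hφ.2.2.2.2

lemma IsHarmonicComponent.specRadOn_diff_lt_one (hC : IsHarmonicComponent B C) :
    specRadOn B (closureSet B C \ C) < 1 := by
  rcases (closureSet B C \ C).eq_empty_or_nonempty with h | h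
  · simp [h, specRadOn_empty]
  · exact hC.2.2 h

lemma eqOn_zero_of_mulVec_eq_self (hB : ∀ v w, 0 ≤ B v w) (hC : IsCommunicatingClass B C)
    (hx : B *ᵥ x = x) (hx_supp : x.support ⊆ closureSet B C) (hx_nonneg : ∀ v ∈ C, 0 ≤ x v)
    {v : V} (hv : v ∈ C) (hxv : x v = 0) : ∀ w ∈ C, x w = 0 := by
  intro w hw
  obtain ⟨k, hk⟩ := hC.reaches hB hv hw
  have hterm (z : V) : 0 ≤ (B ^ k) v z * x z := by
    by_cases hz : z ∈ C
    · exact mul_nonneg (Matrix.pow_apply_nonneg hB k v z) (hx_nonneg z hz)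
    by_cases hxz : x z = 0
    · simp [hxz]
    have hvz : (B ^ k) v z = 0 := (Matrix.pow_apply_nonneg hB k v z).eq_of_not_lt' fun hlt =>
      hz (hC.mem_of_reaches hB hv ⟨k, hlt⟩ (hx_supp hxz))
    simp [hvz]
  have hsum : ∑ z, (B ^ k) v z * x z = 0 := (congrFun (pow_mulVec_eq_self hx k) v).trans hxv
  have hzero := (sum_eq_zero_iff_of_nonneg fun z _ => hterm z).1 hsum w (mem_univ w)
  exact (mul_eq_zero.1 hzero).resolve_left hk.ne'

/- Subtracting from `x` the largest multiple of `φ` below it on `C` leaves a harmonic vector that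
vanishes at a point of `C`, hence on `C`, hence everywhere. -/
lemma IsPhiC.exists_eq_smul (hB : ∀ v w, 0 ≤ B v w) (hC : IsCommunicatingClass B C)
    (hρ : specRadOn B (closureSet B C \ C) < 1) (hφ : IsPhiC B C φ) (hx : B *ᵥ x = x)
    (hx_supp : x.support ⊆ closureSet B C) : ∃ t : ℝ, x = t • φ := by
  have hφ_pos (v : V) (hv : v ∈ C) : 0 < φ v :=
    (hφ.1 v).lt_of_ne' ((hφ.2.2.2.2 v).2 (subset_closureSet B C hv))
  obtain ⟨v, hv, hmin⟩ := Set.exists_min_image C (fun v => x v / φ v) C.toFinite hC.nonempty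
  set t := x v / φ v
  refine ⟨t, sub_eq_zero.1 ?_⟩
  have hu : B *ᵥ (x - t • φ) = x - t • φ := by
    rw [Matrix.mulVec_sub, Matrix.mulVec_smul, hx, hφ.mulVec_eq_self]
  have hu_supp : (x - t • φ).support ⊆ closureSet B C :=
    (Function.support_sub _ _).trans <| Set.union_subset hx_supp <|
      (Function.support_const_smul_subset t φ).trans hφ.support_eq.subset
  have hu_nonneg (w : V) (hw : w ∈ C) : 0 ≤ (x - t • φ) w :=
    sub_nonneg.2 ((le_div_iff₀ (hφ_pos w hw)).1 (hmin w hw))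
  have huv : (x - t • φ) v = 0 := sub_eq_zero.2 (div_mul_cancel₀ _ (hφ_pos v hv).ne').symm
  have hu_zero := eqOn_zero_of_mulVec_eq_self hB hC hu hu_supp hu_nonneg hv huv
  exact eq_zero_of_mulVec_eq_of_specRadOn_lt_one hρ
    (fun w hw => ⟨hu_supp hw, fun hwC => hw (hu_zero w hwC)⟩) fun w _ => congrFun hu w

lemma mulVec_add_eq_self_of_support_subset (hB : ∀ v w, 0 ≤ B v w) (hC : IsCommunicatingClass B C)
    (hx_supp : x.support ⊆ C) (hx : ∀ v ∈ C, (B *ᵥ x) v = x v)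
    (hy_supp : y.support ⊆ closureSet B C \ C)
    (hy : ∀ v ∈ closureSet B C \ C, y v = (B *ᵥ x) v + (B *ᵥ y) v) :
    B *ᵥ (x + y) = x + y := by
  have hf_supp : (x + y).support ⊆ closureSet B C := (Function.support_add _ _).trans <|
    Set.union_subset (hx_supp.trans (subset_closureSet B C)) (hy_supp.trans Set.sdiff_subset)
  have hf_indicator : C.indicator (x + y) = x := by
    rw [Set.indicator_add', Set.indicator_eq_self.2 hx_supp, add_eq_left, Set.indicator_eq_zero']
    exact Set.disjoint_left.2 fun w hw => (hy_supp hw).2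
  ext v
  by_cases hvC : v ∈ C
  · have hyv : y v = 0 := Function.notMem_support.1 fun h => (hy_supp h).2 hvC
    rw [← hC.mulVec_indicator_apply hB hf_supp hvC, hf_indicator, hx v hvC, Pi.add_apply, hyv,
      add_zero]
  by_cases hv : v ∈ closureSet B C
  · have hxv : x v = 0 := Function.notMem_support.1 fun h => hvC (hx_supp h)
    rw [Matrix.mulVec_add, Pi.add_apply, Pi.add_apply, hxv, zero_add, hy v ⟨hv, hvC⟩]
  · rw [Function.notMem_support.1 fun h => hv (hf_supp h)]
    exact mulVec_apply_eq_zero fun w hvw => Function.notMem_support.1 fun h =>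
      hv (mem_closureSet_of_reaches hB (.of_apply_ne_zero hB hvw) (hf_supp h))

/- The Perron vector of `C` is extended by solving a Dirichlet problem on `closureSet B C \ C`. -/
lemma exists_nonneg_mulVec_eq_self_support_eq (hB : ∀ v w, 0 ≤ B v w)
    (hC : IsCommunicatingClass B C) (hρC : specRadOn B C = 1)
    (hρ : specRadOn B (closureSet B C \ C) < 1) :
    ∃ f : V → ℝ, 0 ≤ f ∧ B *ᵥ f = f ∧ f.support = closureSet B C := by
  obtain ⟨x, hx_nonneg, hx0, hx_supp, hx⟩ := exists_mulVec_eq_specRadOn_smul hB hC.nonempty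
  obtain ⟨y, hy_nonneg, hy_supp, hy⟩ :=
    exists_nonneg_eq_add_mulVec_of_specRadOn_lt_one hB hρ (mulVec_nonneg hB hx_nonneg)
  simp only [hρC, one_mul] at hx
  have hf_nonneg : 0 ≤ x + y := add_nonneg hx_nonneg hy_nonneg
  have hf := mulVec_add_eq_self_of_support_subset hB hC hx_supp hx hy_supp hy
  refine ⟨x + y, hf_nonneg, hf, Set.Subset.antisymm ?_ ?_⟩
  · exact (Function.support_add _ _).trans <| Set.union_subset
      (hx_supp.trans (subset_closureSet B C)) (hy_supp.trans Set.sdiff_subset)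
  · rintro v ⟨u, hu, hvu⟩
    obtain ⟨w, hw⟩ : ∃ w, 0 < x w := (Pi.lt_def.1 (hx_nonneg.lt_of_ne' hx0)).2
    have hvw : Reaches B v w := hvu.trans hB (hC.reaches hB hu (hx_supp hw.ne'))
    have hfw : 0 < (x + y) w := add_pos_of_pos_of_nonneg hw (hy_nonneg w)
    exact (hvw.pos_of_mulVec_le hB hf_nonneg hf.le hfw).ne'

lemma exists_isPhiC (hB : ∀ v w, 0 ≤ B v w) (hC : IsCommunicatingClass B C)
    (hρC : specRadOn B C = 1) (hρ : specRadOn B (closureSet B C \ C) < 1) :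
    ∃ φ, IsPhiC B C φ := by
  obtain ⟨f, hf_nonneg, hf, hf_supp⟩ :=
    exists_nonneg_mulVec_eq_self_support_eq hB hC hρC hρ
  obtain ⟨u, hu⟩ := hC.nonempty
  have hsum : 0 < ∑ v, f v := sum_pos' (fun v _ => hf_nonneg v) ⟨u, mem_univ u,
    (hf_nonneg u).lt_of_ne' (hf_supp.ge (subset_closureSet B C hu))⟩
  set φ := (∑ v, f v)⁻¹ • f
  have hφ : B *ᵥ φ = φ := by rw [Matrix.mulVec_smul, hf]
  have hφ_supp : φ.support = closureSet B C := by
    rw [Function.support_const_smul_of_ne_zero _ _ (inv_ne_zero hsum.ne'), hf_supp]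
  refine ⟨φ, fun v => mul_nonneg (inv_nonneg.2 hsum.le) (hf_nonneg v), ?_,
    isHarmonic_iff_mulVec_eq_self.2 hφ, fun v hv => ?_, fun v => by rw [← hφ_supp]; rfl⟩
  · simp [φ, ← mul_sum, hsum.ne']
  · simp only [Set.indicator_mul_right]
    exact (hC.mulVec_indicator_apply hB hφ_supp.le hv).trans (congrFun hφ v)

lemma isPhiC_phiComp (hB : ∀ v w, 0 ≤ B v w) (hC : IsHarmonicComponent B C) :
    IsPhiC B C (phiComp B C) := by
  have h := exists_isPhiC hB hC.1.1 hC.2.1 hC.specRadOn_diff_lt_one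
  rw [phiComp, dif_pos h]
  exact h.choose_spec

end HarmonicComponents

section MinimalVectors

variable {V : Type*}

/-- `ψ` spans an extreme ray of the cone of nonnegative vectors of `W`: every vector of `W` between
`0` and `ψ` is a multiple of `ψ`. For spaces of harmonic vectors this is minimality in the sense of
Martin boundary theory. -/
def IsMinimalIn (W : Submodule ℝ (V → ℝ)) (ψ : V → ℝ) : Prop :=
  ∀ χ ∈ W, 0 ≤ χ → χ ≤ ψ → ∃ c : ℝ, χ = c • ψ

variable [Fintype V] {W : Submodule ℝ (V → ℝ)} {ψ : V → ℝ}

lemma eq_of_mem_stdSimplex_of_eq_smul {x y : V → ℝ} (hx : x ∈ stdSimplex ℝ V)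
    (hy : y ∈ stdSimplex ℝ V) {c : ℝ} (h : x = c • y) : x = y := by
  have hc : c = 1 := by simpa [h, ← mul_sum, hy.2] using hx.2
  rw [h, hc, one_smul]

lemma isMinimalIn_of_mem_extremePoints
    (hψ : ψ ∈ Set.extremePoints ℝ (stdSimplex ℝ V ∩ W)) : IsMinimalIn W ψ := by
  intro χ hχW hχ0 hχψ
  obtain ⟨⟨⟨hψ0, hψ_sum⟩, hψW⟩, hext⟩ := mem_extremePoints_iff_left.1 hψ
  set c := ∑ v, χ v
  have hc0 : 0 ≤ c := sum_nonneg fun v _ => hχ0 v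
  have hc1 : c ≤ 1 := hψ_sum ▸ sum_le_sum fun v _ => hχψ v
  have hd_sum : ∑ v, (χ - c • ψ) v = 0 := by simp [← mul_sum, hψ_sum, c]
  have hdW : χ - c • ψ ∈ W := W.sub_mem hχW (W.smul_mem c hψW)
  have hadd : ψ + (χ - c • ψ) ∈ stdSimplex ℝ V ∩ W := by
    refine ⟨⟨fun v => ?_, ?_⟩, W.add_mem hψW hdW⟩
    · have h : 0 ≤ (1 - c) * ψ v + χ v :=
        add_nonneg (mul_nonneg (sub_nonneg.2 hc1) (hψ0 v)) (hχ0 v)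
      simp only [Pi.add_apply, Pi.sub_apply, Pi.smul_apply, smul_eq_mul]
      linarith
    · simp only [Pi.add_apply, sum_add_distrib, hψ_sum, hd_sum, add_zero]
  have hsub : ψ - (χ - c • ψ) ∈ stdSimplex ℝ V ∩ W := by
    refine ⟨⟨fun v => ?_, ?_⟩, W.sub_mem hψW hdW⟩
    · have h : 0 ≤ c * ψ v + (ψ v - χ v) :=
        add_nonneg (mul_nonneg hc0 (hψ0 v)) (sub_nonneg.2 (hχψ v))
      simp only [Pi.sub_apply, Pi.smul_apply, smul_eq_mul]
      linarith
    · rw [← hψ_sum, ← sub_zero (∑ v, ψ v), ← hd_sum, ← sum_sub_distrib]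
      rfl
  have hmid : ψ ∈ openSegment ℝ (ψ + (χ - c • ψ)) (ψ - (χ - c • ψ)) :=
    ⟨1 / 2, 1 / 2, by norm_num, by norm_num, by norm_num, by module⟩
  exact ⟨c, sub_eq_zero.1 (add_eq_left.1 (hext _ hadd _ hsub hmid))⟩

lemma IsMinimalIn.mem_extremePoints (hmin : IsMinimalIn W ψ) (hψ : ψ ∈ stdSimplex ℝ V ∩ W) :
    ψ ∈ Set.extremePoints ℝ (stdSimplex ℝ V ∩ W) := by
  refine mem_extremePoints_iff_left.2 ⟨hψ, ?_⟩
  rintro x ⟨hx, hxW⟩ y ⟨hy, -⟩ ⟨a, b, ha, hb, -, rfl⟩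
  obtain ⟨c, hc⟩ := hmin (a • x) (W.smul_mem a hxW) (smul_nonneg ha.le hx.1)
    (le_add_of_nonneg_right (smul_nonneg hb.le hy.1))
  refine eq_of_mem_stdSimplex_of_eq_smul hx hψ.1 (c := a⁻¹ * c) ?_
  rw [mul_smul, ← hc, inv_smul_smul₀ ha.ne']

end MinimalVectors

section AlmostHarmonic

open scoped Matrix Topology

variable {B : Matrix V V ℝ} {C : Set V} {s v : V} {x ψ χ : V → ℝ}

lemma IsSink.mulVec_apply (hs : IsSink B s) (x : V → ℝ) : (B *ᵥ x) s = 0 :=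
  mulVec_apply_eq_zero fun w hw => absurd (hs w) hw

lemma IsAlmostHarmonic.mulVec_apply (h : IsAlmostHarmonic B ψ) (hv : ¬ IsSink B v) :
    (B *ᵥ ψ) v = ψ v :=
  h v hv

lemma isAlmostHarmonic_of_mulVec_eq_self (h : B *ᵥ ψ = ψ) : IsAlmostHarmonic B ψ :=
  fun v _ => congrFun h v

lemma IsAlmostHarmonic.mulVec_eq_self (h : IsAlmostHarmonic B ψ) (h0 : ∀ s, IsSink B s → ψ s = 0) :
    B *ᵥ ψ = ψ := by
  ext v
  by_cases hv : IsSink B v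
  · rw [hv.mulVec_apply, h0 v hv]
  · exact h v hv

/-- The almost `B`-harmonic vectors, of arbitrary sign, as a linear subspace. -/
def almostHarmonicSubmodule (B : Matrix V V ℝ) : Submodule ℝ (V → ℝ) where
  carrier := {ψ | IsAlmostHarmonic B ψ}
  zero_mem' := isAlmostHarmonic_of_mulVec_eq_self (Matrix.mulVec_zero B)
  add_mem' {ψ χ} hψ hχ v hv := by
    change (B *ᵥ (ψ + χ)) v = (ψ + χ) v
    rw [Matrix.mulVec_add, Pi.add_apply, hψ.mulVec_apply hv, hχ.mulVec_apply hv, Pi.add_apply]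
  smul_mem' c ψ hψ v hv := by
    change (B *ᵥ (c • ψ)) v = (c • ψ) v
    rw [Matrix.mulVec_smul, Pi.smul_apply, hψ.mulVec_apply hv, Pi.smul_apply]

lemma setOf_normalized_isAlmostHarmonic (B : Matrix V V ℝ) :
    {ψ : V → ℝ | (∀ v, 0 ≤ ψ v) ∧ (∑ v, ψ v = 1) ∧ IsAlmostHarmonic B ψ}
      = stdSimplex ℝ V ∩ almostHarmonicSubmodule B :=
  Set.ext fun _ => and_assoc.symm

variable [DecidableEq V]

/-- The expected-visits function `G(v, s) = ∑ₙ (Bⁿ)ᵥₛ` as a function of `v`. It has the junk value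
`0` where the series diverges, so it is only meaningful at a summable sink `s`. -/
noncomputable def greenFunction (B : Matrix V V ℝ) (s : V) : V → ℝ :=
  fun v => ∑' n : ℕ, (B ^ n) v s

lemma phiSink_eq_smul (B : Matrix V V ℝ) (s : V) :
    phiSink B s = (∑ w, greenFunction B s w)⁻¹ • greenFunction B s :=
  funext fun _ => div_eq_inv_mul _ _

lemma greenFunction_nonneg (hB : ∀ v w, 0 ≤ B v w) (s : V) : 0 ≤ greenFunction B s :=
  fun v => tsum_nonneg fun k => Matrix.pow_apply_nonneg hB k v s

namespace IsSummableSink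

lemma hasSum_greenFunction (hs : IsSummableSink B s) :
    HasSum (fun k : ℕ => B ^ k *ᵥ Pi.single s 1) (greenFunction B s) := by
  refine Pi.hasSum.2 fun v => ?_
  simp only [Matrix.mulVec_single_one]
  exact (hs.2 v).hasSum

lemma greenFunction_apply (hs : IsSummableSink B s) (v : V) :
    greenFunction B s v = (Pi.single s 1 : V → ℝ) v + (B *ᵥ greenFunction B s) v :=
  congrFun (eq_add_mulVec_of_hasSum_pow_mulVec hs.hasSum_greenFunction) v

lemma greenFunction_self (hs : IsSummableSink B s) : greenFunction B s s = 1 := by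
  rw [hs.greenFunction_apply, hs.1.mulVec_apply, Pi.single_eq_same, add_zero]

lemma greenFunction_of_isSink_of_ne (hs : IsSummableSink B s) (hv : IsSink B v) (hvs : v ≠ s) :
    greenFunction B s v = 0 := by
  rw [hs.greenFunction_apply, hv.mulVec_apply, Pi.single_eq_of_ne hvs, add_zero]

lemma isAlmostHarmonic_greenFunction (hs : IsSummableSink B s) :
    IsAlmostHarmonic B (greenFunction B s) := by
  intro v hv
  have hvs : v ≠ s := fun h => hv (h ▸ hs.1)
  have hG := hs.greenFunction_apply v
  rw [Pi.single_eq_of_ne hvs, zero_add] at hG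
  exact hG.symm

lemma sum_greenFunction_pos (hs : IsSummableSink B s) (hB : ∀ v w, 0 ≤ B v w) :
    0 < ∑ v, greenFunction B s v :=
  sum_pos' (fun v _ => greenFunction_nonneg hB s v) ⟨s, mem_univ s, by simp [hs.greenFunction_self]⟩

lemma phiSink_mem (hs : IsSummableSink B s) (hB : ∀ v w, 0 ≤ B v w) :
    phiSink B s ∈ stdSimplex ℝ V ∩ almostHarmonicSubmodule B := by
  have hsum := hs.sum_greenFunction_pos hB
  rw [phiSink_eq_smul]
  refine ⟨⟨smul_nonneg (inv_nonneg.2 hsum.le) (greenFunction_nonneg hB s), ?_⟩,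
    Submodule.smul_mem _ _ hs.isAlmostHarmonic_greenFunction⟩
  simp [← mul_sum, hsum.ne']

lemma eq_smul_greenFunction (hs : IsSummableSink B s) (hB : ∀ v w, 0 ≤ B v w)
    (hχ : IsAlmostHarmonic B χ) (hχ0 : 0 ≤ χ) {c : ℝ} (hχ_le : χ ≤ c • greenFunction B s) :
    χ = χ s • greenFunction B s := by
  set G := greenFunction B s
  have hG0 : 0 ≤ G := greenFunction_nonneg hB s
  have hu_mem : χ - χ s • G ∈ almostHarmonicSubmodule B :=
    Submodule.sub_mem _ hχ (Submodule.smul_mem _ _ hs.isAlmostHarmonic_greenFunction)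
  have hu : B *ᵥ (χ - χ s • G) = χ - χ s • G := by
    refine IsAlmostHarmonic.mulVec_eq_self hu_mem fun v hv => ?_
    obtain rfl | hvs := eq_or_ne v s
    · simp [G, hs.greenFunction_self]
    · have hGv : G v = 0 := hs.greenFunction_of_isSink_of_ne hv hvs
      have hχv : χ v = 0 := le_antisymm (by simpa [hGv] using hχ_le v) (hχ0 v)
      simp [hGv, hχv]
  have hsG : 0 ≤ χ s • G := smul_nonneg (hχ0 s) hG0
  have hu_le : |χ - χ s • G| ≤ (c + χ s) • G := by
    rw [add_smul]
    exact abs_le'.2 ⟨(sub_le_self _ hsG).trans (hχ_le.trans (le_add_of_nonneg_right hsG)),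
      (neg_sub _ _).trans_le
        ((sub_le_self _ hχ0).trans (le_add_of_nonneg_left (hχ0.trans hχ_le)))⟩
  have hlim : Tendsto (fun N : ℕ => B ^ N *ᵥ ((c + χ s) • G)) atTop (𝓝 0) := by
    simpa only [Matrix.mulVec_smul, smul_zero] using
      (tendsto_pow_mulVec_zero_of_hasSum hs.hasSum_greenFunction).const_smul (c + χ s)
  exact sub_eq_zero.1 (eq_zero_of_mulVec_eq_self_of_tendsto hB hu hu_le hlim)

lemma isMinimalIn_phiSink (hs : IsSummableSink B s) (hB : ∀ v w, 0 ≤ B v w) :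
    IsMinimalIn (almostHarmonicSubmodule B) (phiSink B s) := by
  intro χ hχ hχ0 hχ_le
  rw [phiSink_eq_smul] at hχ_le ⊢
  refine ⟨χ s * ∑ v, greenFunction B s v, ?_⟩
  rw [mul_smul, smul_inv_smul₀ (hs.sum_greenFunction_pos hB).ne']
  exact hs.eq_smul_greenFunction hB hχ hχ0 hχ_le

end IsSummableSink

lemma isSummableSink_and_smul_greenFunction_le (hB : ∀ v w, 0 ≤ B v w) (hψ : IsAlmostHarmonic B ψ)
    (hψ0 : 0 ≤ ψ) (hs : IsSink B s) (hsψ : s ∈ ψ.support) :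
    IsSummableSink B s ∧ ψ s • greenFunction B s ≤ ψ := by
  have hψs : 0 < ψ s := (hψ0 s).lt_of_ne' hsψ
  have hsuper : ψ s • Pi.single s 1 + B *ᵥ ψ ≤ ψ := by
    intro v
    by_cases hv : IsSink B v
    · obtain rfl | hvs := eq_or_ne v s
      · simp [hv.mulVec_apply]
      · simpa [hv.mulVec_apply, hvs] using hψ0 v
    · have hvs : v ≠ s := fun h => hv (h ▸ hs)
      simp [hψ.mulVec_apply hv, hvs]
  have hpartial (N : ℕ) (v : V) : ψ s * ∑ k ∈ range N, (B ^ k) v s ≤ ψ v := by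
    simpa [Matrix.mulVec_smul, mul_sum] using sum_range_pow_mulVec_le hB hψ0 hsuper N v
  have hnonneg (v : V) (k : ℕ) : 0 ≤ (B ^ k) v s := Matrix.pow_apply_nonneg hB k v s
  have hpartial_div (v : V) (N : ℕ) : ∑ k ∈ range N, (B ^ k) v s ≤ ψ v / ψ s :=
    (le_div_iff₀' hψs).2 (hpartial N v)
  exact ⟨⟨hs, fun v => summable_of_sum_range_le (hnonneg v) (hpartial_div v)⟩, fun v =>
    (le_div_iff₀' hψs).1 (Real.tsum_le_of_sum_range_le (hnonneg v) (hpartial_div v))⟩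

lemma IsMinimalIn.isSummableSink_and_eq_phiSink (hB : ∀ v w, 0 ≤ B v w)
    (hmin : IsMinimalIn (almostHarmonicSubmodule B) ψ)
    (hψ : ψ ∈ stdSimplex ℝ V ∩ almostHarmonicSubmodule B) (hs : IsSink B s)
    (hsψ : s ∈ ψ.support) : IsSummableSink B s ∧ ψ = phiSink B s := by
  obtain ⟨hsum, hle⟩ := isSummableSink_and_smul_greenFunction_le hB hψ.2 hψ.1.1 hs hsψ
  refine ⟨hsum, ?_⟩
  obtain ⟨c, hc⟩ := hmin _ (Submodule.smul_mem _ _ hsum.isAlmostHarmonic_greenFunction)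
    (smul_nonneg (hψ.1.1 s) (greenFunction_nonneg hB s)) hle
  have hc1 : c = 1 := by
    have hcs := congrFun hc s
    simp only [Pi.smul_apply, hsum.greenFunction_self, smul_eq_mul, mul_one] at hcs
    exact (mul_eq_right₀ hsψ).1 hcs.symm
  rw [hc1, one_smul] at hc
  refine eq_of_mem_stdSimplex_of_eq_smul hψ.1 (hsum.phiSink_mem hB).1
    (c := ψ s * ∑ v, greenFunction B s v) ?_
  rw [phiSink_eq_smul, mul_smul, smul_inv_smul₀ (hsum.sum_greenFunction_pos hB).ne', hc]

lemma phiComp_mem (hB : ∀ v w, 0 ≤ B v w) (hC : IsHarmonicComponent B C) :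
    phiComp B C ∈ stdSimplex ℝ V ∩ almostHarmonicSubmodule B :=
  have hφ := isPhiC_phiComp hB hC
  ⟨⟨hφ.1, hφ.2.1⟩, isAlmostHarmonic_of_mulVec_eq_self hφ.mulVec_eq_self⟩

lemma isMinimalIn_phiComp (hB : ∀ v w, 0 ≤ B v w) (hC : IsHarmonicComponent B C) :
    IsMinimalIn (almostHarmonicSubmodule B) (phiComp B C) := by
  intro χ hχ hχ0 hχφ
  have hφ := isPhiC_phiComp hB hC
  have hχ_zero {v : V} (hv : phiComp B C v = 0) : χ v = 0 :=
    le_antisymm ((hχφ v).trans hv.le) (hχ0 v)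
  have hχ_harm : B *ᵥ χ = χ := IsAlmostHarmonic.mulVec_eq_self hχ fun s hs =>
    hχ_zero (by rw [← hφ.mulVec_eq_self, hs.mulVec_apply])
  have hχ_supp : χ.support ⊆ closureSet B C :=
    fun v hv => (hφ.2.2.2.2 v).1 fun h => hv (hχ_zero h)
  exact hφ.exists_eq_smul hB hC.1.1 hC.specRadOn_diff_lt_one hχ_harm hχ_supp

lemma IsMinimalIn.exists_tendsto_pow_mulVec_indicator (hB : ∀ v w, 0 ≤ B v w)
    (hmin : IsMinimalIn (almostHarmonicSubmodule B) ψ) (hψ0 : 0 ≤ ψ) (hψ_ne : ψ ≠ 0)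
    (hψ : B *ᵥ ψ = ψ) :
    ∃ C, IsCommunicatingClass B C ∧ C ⊆ ψ.support ∧
      (∀ v ∈ C, (B *ᵥ C.indicator ψ) v = ψ v) ∧
      Tendsto (fun k : ℕ => B ^ k *ᵥ C.indicator ψ) atTop (𝓝 ψ) := by
  have hback (v w : V) (hvw : Reaches B v w) (hw : w ∈ ψ.support) : v ∈ ψ.support :=
    (hvw.pos_of_mulVec_le hB hψ0 hψ.le ((hψ0 w).lt_of_ne' hw)).ne'
  obtain ⟨C, hC_supp, hC, hterm⟩ :=
    exists_isCommunicatingClass_terminal hB (Function.support_nonempty_iff.2 hψ_ne) hback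
  have hBg (v : V) (hv : v ∈ C) : (B *ᵥ C.indicator ψ) v = ψ v := by
    rw [mulVec_indicator_apply_of_eq_zero, hψ]
    exact fun w hwC hw => by_contra fun hvw =>
      hwC (hterm v hv w hw (.of_apply_ne_zero hB hvw))
  have hg0 : 0 ≤ C.indicator ψ := fun v => Set.indicator_nonneg (fun w _ => hψ0 w) v
  have hgψ : C.indicator ψ ≤ ψ := Set.indicator_le_self' fun w _ => hψ0 w
  have hg : C.indicator ψ ≤ B *ᵥ C.indicator ψ := Set.indicator_le' (fun v hv => (hBg v hv).ge)
    fun v _ => mulVec_nonneg hB hg0 v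
  obtain ⟨χ, hlim, hχ, hgχ, hχψ⟩ := exists_tendsto_pow_mulVec hB hg hgψ hψ.le
  obtain ⟨c, rfl⟩ := hmin χ (isAlmostHarmonic_of_mulVec_eq_self hχ) (hg0.trans hgχ) hχψ
  obtain ⟨v, hv⟩ := hC.nonempty
  have hc : c = 1 := by
    have hcv : c * ψ v = ψ v := (hχψ v).antisymm (by simpa [hv] using hgχ v)
    exact (mul_eq_right₀ (hC_supp hv)).1 hcv
  exact ⟨C, hC, hC_supp, hBg, by simpa [hc] using hlim⟩

lemma support_eq_closureSet_of_tendsto (hB : ∀ v w, 0 ≤ B v w) (hψ0 : 0 ≤ ψ) (hψ : B *ᵥ ψ = ψ)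
    (hC : C ⊆ ψ.support)
    (hlim : Tendsto (fun k : ℕ => B ^ k *ᵥ C.indicator ψ) atTop (𝓝 ψ)) :
    ψ.support = closureSet B C := by
  refine Set.Subset.antisymm (fun v hv => ?_) ?_
  · obtain ⟨k, hk⟩ := ((tendsto_pi_nhds.1 hlim v).eventually_ne hv).exists
    by_contra hvC
    refine hk (mulVec_apply_eq_zero fun w hvw => Set.indicator_of_notMem (fun hw => hvC ?_) ψ)
    exact ⟨w, hw, k, (Matrix.pow_apply_nonneg hB k v w).lt_of_ne' hvw⟩
  · rintro v ⟨w, hw, hvw⟩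
    exact (hvw.pos_of_mulVec_le hB hψ0 hψ.le ((hψ0 w).lt_of_ne' (hC hw))).ne'

lemma IsCommunicatingClass.isHarmonicComponent_of_tendsto (hC : IsCommunicatingClass B C)
    (hB : ∀ v w, 0 ≤ B v w) (hψ0 : 0 ≤ ψ) (hψ : B *ᵥ ψ = ψ) (hψ_supp : ψ.support = closureSet B C)
    (hBg : ∀ v ∈ C, (B *ᵥ C.indicator ψ) v = ψ v)
    (hlim : Tendsto (fun k : ℕ => B ^ k *ᵥ C.indicator ψ) atTop (𝓝 ψ)) :
    IsHarmonicComponent B C := by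
  have hψ_pos (v : V) (hv : v ∈ closureSet B C) : 0 < ψ v :=
    (hψ0 v).lt_of_ne' (hψ_supp.ge hv)
  have hC_pos (v : V) (hv : v ∈ C) : 0 < ψ v := hψ_pos v (subset_closureSet B C hv)
  refine ⟨⟨hC, ?_⟩, ?_, fun hne => ?_⟩
  · obtain ⟨v, hv⟩ := hC.nonempty
    by_contra! hzero
    refine (hC_pos v hv).ne' ((hBg v hv).symm.trans (mulVec_apply_eq_zero fun w hvw => ?_))
    exact Set.indicator_of_notMem (fun hw => hvw (hzero v hv w hw)) ψ
  · refine specRadOn_eq_of_mulVec_eq hB hC.nonempty (x := C.indicator ψ)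
      Set.support_indicator_subset (fun v hv => ?_) fun v hv => ?_
    · simpa [hv] using hC_pos v hv
    · simpa [hv] using hBg v hv
  · refine specRadOn_lt_one_of_tendsto_pow_mulVec hB hne (d := ψ - C.indicator ψ)
      (sub_nonneg.2 (Set.indicator_le_self' fun w _ => hψ0 w)) (fun v hv => ?_) ?_
    · simpa [hv.2] using hψ_pos v hv.1
    · simpa [Matrix.mulVec_sub, pow_mulVec_eq_self hψ] using hlim.const_sub ψ

lemma IsMinimalIn.exists_eq_phiComp (hB : ∀ v w, 0 ≤ B v w)
    (hmin : IsMinimalIn (almostHarmonicSubmodule B) ψ)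
    (hψ : ψ ∈ stdSimplex ℝ V) (hBψ : B *ᵥ ψ = ψ) :
    ∃ C, IsHarmonicComponent B C ∧ ψ = phiComp B C := by
  have hψ_ne : ψ ≠ 0 := fun h => by simpa [h] using hψ.2
  obtain ⟨C, hC, hC_supp, hBg, hlim⟩ :=
    hmin.exists_tendsto_pow_mulVec_indicator hB hψ.1 hψ_ne hBψ
  have hψ_supp := support_eq_closureSet_of_tendsto hB hψ.1 hBψ hC_supp hlim
  have hCh := hC.isHarmonicComponent_of_tendsto hB hψ.1 hBψ hψ_supp hBg hlim
  obtain ⟨t, ht⟩ := (isPhiC_phiComp hB hCh).exists_eq_smul hB hC hCh.specRadOn_diff_lt_one hBψ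
    hψ_supp.le
  exact ⟨C, hCh, eq_of_mem_stdSimplex_of_eq_smul hψ (phiComp_mem hB hCh).1 ht⟩

end AlmostHarmonic

/-- The normalized almost `B`-harmonic vectors form a convex set whose extreme points are
exactly the vectors `φ^C` for `C` a `B`-harmonic component together with the vectors `φ^s`
for `s` a `B`-summable sink. -/
theorem almostHarmonic_simplex {V : Type*} [Fintype V] [Nonempty V] [DecidableEq V]
    (B : Matrix V V ℝ) (hB : ∀ v w, 0 ≤ B v w) :
    Convex ℝ {ψ : V → ℝ | (∀ v, 0 ≤ ψ v) ∧ (∑ v, ψ v = 1) ∧ IsAlmostHarmonic B ψ} ∧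
    Set.extremePoints ℝ
        {ψ : V → ℝ | (∀ v, 0 ≤ ψ v) ∧ (∑ v, ψ v = 1) ∧ IsAlmostHarmonic B ψ}
      = {φ : V → ℝ | ∃ C : Set V, IsHarmonicComponent B C ∧ φ = phiComp B C} ∪
        {φ : V → ℝ | ∃ s : V, IsSummableSink B s ∧ φ = phiSink B s} := by
  rw [setOf_normalized_isAlmostHarmonic]
  refine ⟨(convex_stdSimplex ℝ V).inter (almostHarmonicSubmodule B).convex,
    Set.Subset.antisymm (fun ψ hψ => ?_) ?_⟩
  · have hmin := isMinimalIn_of_mem_extremePoints hψ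
    by_cases h : ∃ s, IsSink B s ∧ s ∈ ψ.support
    · obtain ⟨s, hs, hsψ⟩ := h
      exact Or.inr ⟨s, hmin.isSummableSink_and_eq_phiSink hB hψ.1 hs hsψ⟩
    · have hψ_zero (s : V) (hs : IsSink B s) : ψ s = 0 := by_contra fun hsψ => h ⟨s, hs, hsψ⟩
      exact Or.inl (hmin.exists_eq_phiComp hB hψ.1.1 (hψ.1.2.mulVec_eq_self hψ_zero))
  · rintro φ (⟨C, hC, rfl⟩ | ⟨s, hs, rfl⟩)
    · exact (isMinimalIn_phiComp hB hC).mem_extremePoints (phiComp_mem hB hC)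
    · exact (hs.isMinimalIn_phiSink hB).mem_extremePoints (hs.phiSink_mem hB)
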